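/- Let p0, p1 ∈ (0,1) with p0 + p1 = 1 and let f, g : (0,1) → (0,1) be differentiable functions satisfying, for all a ∈ (0,1): f(a) + g(a) > 1, f'(a) > 0, and f'(a) = −(a·p0/((1−a)·p1))·g'(a). Define I(a) = H_b(p0·f(a) + p1·(1−g(a))) − p0·H_b(f(a)) − p1·H_b(g(a)). Then I has at most one stationary point in (0,1): there exists at most one a* ∈ (0,1) with I'(a*) = 0. Equivalently, the function F(a) = log(f(a)/(1−f(a))) + (p1²·(a−1)/(p0²·a))·log(g(a)/(1−g(a))) − ((p0²·a + p1²·(1−a))/(p0²·a))·log((p0·f(a) + p1·(1−g(a)))/(p0·(1−f(a)) + p1·g(a))) is strictly increasing on (0,1) and hence has at most one zero. -/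

import Mathlib

/-!
Write `L w = log (w / (1 - w))`, `q = p0 f + p1 (1 - g)` and `r = (p1 / p0)² (1 - a) / a`. The
relation between `f'` and `g'` says `p1 g' = -r p0 f'`, so `q' = (1 + r) p0 f'` and
`I' = p0 f' F` with `F = L f - r L g - (1 + r) L q`. It therefore suffices that `F' > 0`, where
`F' = p0 f' (1 / (p0 f (1 - f)) + r² / (p1 g (1 - g)) - (1 + r)² / (q (1 - q))) - r' (L g + L q)`.
The bracket is nonnegative: by the law of total variance
`q (1 - q) ≥ p0 f (1 - f) + p1 g (1 - g)`, and the Cauchy–Schwarz inequality in Engel form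
applies. The last term is positive because `r' < 0`, while `f + g > 1` gives `q > 1 - g` and
hence `L q > -L g`.
-/

/-- Binary entropy function. -/
noncomputable def Hb (w : ℝ) : ℝ := -(w * Real.log w) - (1 - w) * Real.log (1 - w)

/-- The mutual information as a function of the posterior level `a`. -/
noncomputable def Iq (p0 p1 : ℝ) (f g : ℝ → ℝ) (a : ℝ) : ℝ :=
  Hb (p0 * f a + p1 * (1 - g a)) - p0 * Hb (f a) - p1 * Hb (g a)

/-- The function `F` whose zero characterizes the stationary points of the mutual
information as a function of the posterior level `a`. -/
noncomputable def Fq (p0 p1 : ℝ) (f g : ℝ → ℝ) (a : ℝ) : ℝ :=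
  Real.log (f a / (1 - f a)) +
    (p1 ^ 2 * (a - 1) / (p0 ^ 2 * a)) * Real.log (g a / (1 - g a)) -
    ((p0 ^ 2 * a + p1 ^ 2 * (1 - a)) / (p0 ^ 2 * a)) *
      Real.log ((p0 * f a + p1 * (1 - g a)) / (p0 * (1 - f a) + p1 * g a))

open Set

lemma add_sq_div_add_le {K : Type*} [Field K] [LinearOrder K] [IsStrictOrderedRing K] {u v : K}
    (s t : K) (hu : 0 < u) (hv : 0 < v) :
    (s + t) ^ 2 / (u + v) ≤ s ^ 2 / u + t ^ 2 / v := by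
  simpa using Finset.sq_sum_div_le_sum_sq_div Finset.univ ![s, t] (g := ![u, v])
    (by simp [Fin.forall_fin_two, hu, hv])

section LogOdds

/-- The log-odds (logit) of a probability `w`. -/
noncomputable def logOdds (w : ℝ) : ℝ := Real.log (w / (1 - w))

lemma logOdds_eq_log_sub_log {w : ℝ} (hw0 : w ≠ 0) (hw1 : w ≠ 1) :
    logOdds w = Real.log w - Real.log (1 - w) :=
  Real.log_div hw0 (sub_ne_zero.2 hw1.symm)

lemma logOdds_one_sub (w : ℝ) : logOdds (1 - w) = -logOdds w := by
  rw [logOdds, logOdds, sub_sub_cancel, ← Real.log_inv, inv_div]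

lemma strictMonoOn_logOdds : StrictMonoOn logOdds (Ioo 0 1) := by
  intro v hv w hw hvw
  have hv' : 0 < 1 - v := sub_pos.2 hv.2
  have hw' : 0 < 1 - w := sub_pos.2 hw.2
  refine Real.log_lt_log (div_pos hv.1 hv') ?_
  rw [div_lt_div_iff₀ hv' hw']
  linarith

lemma hasDerivAt_logOdds {w : ℝ} (hw0 : w ≠ 0) (hw1 : w ≠ 1) :
    HasDerivAt logOdds (1 / (w * (1 - w))) w := by
  have hw1' : 1 - w ≠ 0 := sub_ne_zero.2 hw1.symm
  have hodds := (hasDerivAt_id w).div ((hasDerivAt_id w).const_sub 1) hw1'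
  refine (hodds.log (div_ne_zero hw0 hw1')).congr_deriv ?_
  simp only [id_eq, Pi.div_apply]
  field_simp
  ring

lemma Hb_eq_binEntropy : Hb = Real.binEntropy := by
  funext w
  rw [Hb, Real.binEntropy, Real.log_inv, Real.log_inv]
  ring

lemma hasDerivAt_Hb {w : ℝ} (hw0 : w ≠ 0) (hw1 : w ≠ 1) : HasDerivAt Hb (-logOdds w) w := by
  rw [Hb_eq_binEntropy, logOdds_eq_log_sub_log hw0 hw1, neg_sub]
  exact Real.hasDerivAt_binEntropy hw0 hw1

end LogOdds

section OutputProb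

variable {p0 p1 x y : ℝ}

/-- The probability of output `0` of the binary channel whose input has law `(p0, p1)` and whose
matrix has diagonal `(x, y)`. -/
def outputProb (p0 p1 x y : ℝ) : ℝ := p0 * x + p1 * (1 - y)

lemma outputProb_mem_Ioo (hp0 : 0 ≤ p0) (hp1 : 0 ≤ p1) (hp : p0 + p1 = 1)
    (hx : x ∈ Ioo 0 1) (hy : y ∈ Ioo 0 1) : outputProb p0 p1 x y ∈ Ioo 0 1 :=
  convex_Ioo 0 1 hx (Ioo.one_sub_mem hy) hp0 hp1 hp

lemma one_sub_outputProb (hp : p0 + p1 = 1) :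
    1 - outputProb p0 p1 x y = p0 * (1 - x) + p1 * y := by
  rw [outputProb]
  linear_combination -hp

lemma one_sub_lt_outputProb (hp0 : 0 < p0) (hp : p0 + p1 = 1) (hxy : 1 < x + y) :
    1 - y < outputProb p0 p1 x y := by
  have hgap : outputProb p0 p1 x y - (1 - y) = p0 * (x + y - 1) := by
    rw [outputProb]
    linear_combination (1 - y) * hp
  exact sub_pos.1 (hgap ▸ mul_pos hp0 (sub_pos.2 hxy))

lemma logOdds_add_logOdds_outputProb_pos (hp0 : 0 < p0) (hp1 : 0 ≤ p1) (hp : p0 + p1 = 1)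
    (hx : x ∈ Ioo 0 1) (hy : y ∈ Ioo 0 1) (hxy : 1 < x + y) :
    0 < logOdds y + logOdds (outputProb p0 p1 x y) := by
  have hlt : logOdds (1 - y) < logOdds (outputProb p0 p1 x y) :=
    strictMonoOn_logOdds (Ioo.one_sub_mem hy) (outputProb_mem_Ioo hp0.le hp1 hp hx hy)
      (one_sub_lt_outputProb hp0 hp hxy)
  rw [logOdds_one_sub] at hlt
  linarith

/-- The law of total variance for the output of the channel. -/
lemma outputProb_mul_one_sub (hp : p0 + p1 = 1) :
    outputProb p0 p1 x y * (1 - outputProb p0 p1 x y) =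
      p0 * (x * (1 - x)) + p1 * (y * (1 - y)) + p0 * p1 * (x + y - 1) ^ 2 := by
  obtain rfl : p1 = 1 - p0 := eq_sub_of_add_eq' hp
  rw [outputProb]
  ring

lemma one_add_sq_div_outputProb_le (r : ℝ) (hp0 : 0 < p0) (hp1 : 0 < p1) (hp : p0 + p1 = 1)
    (hx : x ∈ Ioo 0 1) (hy : y ∈ Ioo 0 1) :
    (1 + r) ^ 2 / (outputProb p0 p1 x y * (1 - outputProb p0 p1 x y)) ≤
      1 / (p0 * (x * (1 - x))) + r ^ 2 / (p1 * (y * (1 - y))) := by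
  have hvarx : 0 < p0 * (x * (1 - x)) := mul_pos hp0 (mul_pos hx.1 (sub_pos.2 hx.2))
  have hvary : 0 < p1 * (y * (1 - y)) := mul_pos hp1 (mul_pos hy.1 (sub_pos.2 hy.2))
  calc (1 + r) ^ 2 / (outputProb p0 p1 x y * (1 - outputProb p0 p1 x y))
      ≤ (1 + r) ^ 2 / (p0 * (x * (1 - x)) + p1 * (y * (1 - y))) := by
        gcongr
        rw [outputProb_mul_one_sub hp]
        exact le_add_of_nonneg_right (by positivity)
    _ ≤ 1 / (p0 * (x * (1 - x))) + r ^ 2 / (p1 * (y * (1 - y))) := by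
        simpa only [one_pow] using add_sq_div_add_le 1 r hvarx hvary

end OutputProb

section InfoSlope

variable {p0 p1 : ℝ} {f g r : ℝ → ℝ}

/-- The rate of change of the mutual information with respect to `p0 * x` when the diagonal
`(x, y)` of the channel matrix moves so that `p1 * dy = -r * p0 * dx`. -/
noncomputable def infoSlope (p0 p1 r x y : ℝ) : ℝ :=
  logOdds x - r * logOdds y - (1 + r) * logOdds (outputProb p0 p1 x y)

lemma hasDerivAt_outputProb {f' g' ρ a : ℝ} (hf : HasDerivAt f f' a) (hg : HasDerivAt g g' a)
    (hfg' : p1 * g' = -(ρ * (p0 * f'))) :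
    HasDerivAt (fun t ↦ outputProb p0 p1 (f t) (g t)) ((1 + ρ) * (p0 * f')) a := by
  refine ((hf.const_mul p0).add ((hg.const_sub 1).const_mul p1)).congr_deriv ?_
  linear_combination -hfg'

lemma hasDerivAt_Iq {f' g' ρ a : ℝ} (hp0 : 0 ≤ p0) (hp1 : 0 ≤ p1) (hp : p0 + p1 = 1)
    (hfa : f a ∈ Ioo 0 1) (hga : g a ∈ Ioo 0 1)
    (hf : HasDerivAt f f' a) (hg : HasDerivAt g g' a) (hfg' : p1 * g' = -(ρ * (p0 * f'))) :
    HasDerivAt (Iq p0 p1 f g) (p0 * f' * infoSlope p0 p1 ρ (f a) (g a)) a := by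
  have hq := outputProb_mem_Ioo hp0 hp1 hp hfa hga
  have hHq := (hasDerivAt_Hb hq.1.ne' hq.2.ne).comp a (hasDerivAt_outputProb hf hg hfg')
  have hHf := (hasDerivAt_Hb hfa.1.ne' hfa.2.ne).comp a hf
  have hHg := (hasDerivAt_Hb hga.1.ne' hga.2.ne).comp a hg
  refine ((hHq.sub (hHf.const_mul p0)).sub (hHg.const_mul p1)).congr_deriv ?_
  rw [infoSlope]
  linear_combination logOdds (g a) * hfg'

lemma hasDerivAt_infoSlope {f' g' r' a : ℝ} (hp0 : 0 < p0) (hp1 : 0 < p1) (hp : p0 + p1 = 1)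
    (hfa : f a ∈ Ioo 0 1) (hga : g a ∈ Ioo 0 1)
    (hf : HasDerivAt f f' a) (hg : HasDerivAt g g' a) (hr : HasDerivAt r r' a)
    (hfg' : p1 * g' = -(r a * (p0 * f'))) :
    HasDerivAt (fun t ↦ infoSlope p0 p1 (r t) (f t) (g t))
      (p0 * f' * (1 / (p0 * (f a * (1 - f a))) + r a ^ 2 / (p1 * (g a * (1 - g a))) -
          (1 + r a) ^ 2 /
            (outputProb p0 p1 (f a) (g a) * (1 - outputProb p0 p1 (f a) (g a)))) -
        r' * (logOdds (g a) + logOdds (outputProb p0 p1 (f a) (g a)))) a := by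
  have hq := outputProb_mem_Ioo hp0.le hp1.le hp hfa hga
  have hLf := (hasDerivAt_logOdds hfa.1.ne' hfa.2.ne).comp a hf
  have hLg := (hasDerivAt_logOdds hga.1.ne' hga.2.ne).comp a hg
  have hLq := (hasDerivAt_logOdds hq.1.ne' hq.2.ne).comp a (hasDerivAt_outputProb hf hg hfg')
  refine ((hLf.sub (hr.mul hLg)).sub ((hr.const_add 1).mul hLq)).congr_deriv ?_
  obtain rfl : g' = -(r a * (p0 * f')) / p1 := by rw [← hfg', mul_div_cancel_left₀ _ hp1.ne']
  simp only [Function.comp_apply, div_eq_mul_inv, mul_inv]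
  linear_combination f' * (f a)⁻¹ * (1 - f a)⁻¹ * (mul_inv_cancel₀ hp0.ne').symm

lemma strictMonoOn_infoSlope {D : Set ℝ} {f' g' r' : ℝ → ℝ} (hD : Convex ℝ D)
    (hp0 : 0 < p0) (hp1 : 0 < p1) (hp : p0 + p1 = 1)
    (hfmem : ∀ a ∈ D, f a ∈ Ioo 0 1) (hgmem : ∀ a ∈ D, g a ∈ Ioo 0 1)
    (hfg : ∀ a ∈ D, 1 < f a + g a)
    (hf : ∀ a ∈ D, HasDerivAt f (f' a) a) (hg : ∀ a ∈ D, HasDerivAt g (g' a) a)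
    (hr : ∀ a ∈ D, HasDerivAt r (r' a) a)
    (hf' : ∀ a ∈ D, 0 ≤ f' a) (hr' : ∀ a ∈ D, r' a < 0)
    (hfg' : ∀ a ∈ D, p1 * g' a = -(r a * (p0 * f' a))) :
    StrictMonoOn (fun a ↦ infoSlope p0 p1 (r a) (f a) (g a)) D := by
  have hderiv := fun a ha ↦ hasDerivAt_infoSlope hp0 hp1 hp (hfmem a ha) (hgmem a ha)
    (hf a ha) (hg a ha) (hr a ha) (hfg' a ha)
  refine strictMonoOn_of_deriv_pos hD
    (fun a ha ↦ (hderiv a ha).continuousAt.continuousWithinAt) fun a ha ↦ ?_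
  replace ha := interior_subset ha
  have hbracket := one_add_sq_div_outputProb_le (r a) hp0 hp1 hp (hfmem a ha) (hgmem a ha)
  have hlog := logOdds_add_logOdds_outputProb_pos hp0 hp1.le hp (hfmem a ha) (hgmem a ha)
    (hfg a ha)
  have hnonneg := mul_nonneg (mul_nonneg hp0.le (hf' a ha)) (sub_nonneg.2 hbracket)
  have hneg := mul_neg_of_neg_of_pos (hr' a ha) hlog
  rw [(hderiv a ha).deriv]
  linarith

end InfoSlope

section PosteriorRatio

variable {p0 p1 a : ℝ}

/-- The ratio `-(p1 * g' a) / (p0 * f' a)` prescribed at posterior level `a`, that is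
`p1² (1 - a) / (p0² a)`. -/
noncomputable def posteriorRatio (p0 p1 a : ℝ) : ℝ := (p1 / p0) ^ 2 * (a⁻¹ - 1)

lemma hasDerivAt_posteriorRatio (p0 p1 : ℝ) (ha : a ≠ 0) :
    HasDerivAt (posteriorRatio p0 p1) ((p1 / p0) ^ 2 * -(a ^ 2)⁻¹) a :=
  ((hasDerivAt_inv ha).sub_const 1).const_mul _

lemma mul_eq_neg_posteriorRatio_mul {u v : ℝ} (hp0 : p0 ≠ 0) (hp1 : p1 ≠ 0)
    (ha0 : a ≠ 0) (ha1 : a ≠ 1) (h : u = -(a * p0 / ((1 - a) * p1)) * v) :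
    p1 * v = -(posteriorRatio p0 p1 a * (p0 * u)) := by
  have ha1' : 1 - a ≠ 0 := sub_ne_zero.2 ha1.symm
  rw [h, posteriorRatio]
  field_simp

lemma Fq_eq_infoSlope (f g : ℝ → ℝ) (hp0 : p0 ≠ 0) (hp : p0 + p1 = 1) (ha : a ≠ 0) :
    Fq p0 p1 f g a = infoSlope p0 p1 (posteriorRatio p0 p1 a) (f a) (g a) := by
  have hcoeff : p1 ^ 2 * (a - 1) / (p0 ^ 2 * a) = -posteriorRatio p0 p1 a := by
    rw [posteriorRatio]
    field_simp
    ring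
  have hcoeff_one_add :
      (p0 ^ 2 * a + p1 ^ 2 * (1 - a)) / (p0 ^ 2 * a) = 1 + posteriorRatio p0 p1 a := by
    rw [posteriorRatio]
    field_simp
  rw [Fq, hcoeff, hcoeff_one_add, ← one_sub_outputProb hp, neg_mul, ← sub_eq_add_neg]
  rfl

end PosteriorRatio

/-- under the listed hypotheses, `F` is strictly increasing on `(0,1)`
(hence has at most one zero) and `I` has at most one stationary point in `(0,1)`. -/
theorem stmt_14
    (p0 p1 : ℝ) (hp0 : p0 ∈ Set.Ioo (0:ℝ) 1) (hp1 : p1 ∈ Set.Ioo (0:ℝ) 1)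
    (hp : p0 + p1 = 1)
    (f g f' g' : ℝ → ℝ)
    (hfmem : ∀ a ∈ Set.Ioo (0:ℝ) 1, f a ∈ Set.Ioo (0:ℝ) 1)
    (hgmem : ∀ a ∈ Set.Ioo (0:ℝ) 1, g a ∈ Set.Ioo (0:ℝ) 1)
    (hfg : ∀ a ∈ Set.Ioo (0:ℝ) 1, 1 < f a + g a)
    (hfd : ∀ a ∈ Set.Ioo (0:ℝ) 1, HasDerivAt f (f' a) a)
    (hgd : ∀ a ∈ Set.Ioo (0:ℝ) 1, HasDerivAt g (g' a) a)
    (hf'pos : ∀ a ∈ Set.Ioo (0:ℝ) 1, 0 < f' a)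
    (hrel : ∀ a ∈ Set.Ioo (0:ℝ) 1, f' a = -(a * p0 / ((1 - a) * p1)) * g' a) :
    StrictMonoOn (Fq p0 p1 f g) (Set.Ioo 0 1) ∧
    ∀ a b : ℝ, a ∈ Set.Ioo (0:ℝ) 1 → b ∈ Set.Ioo (0:ℝ) 1 →
      deriv (Iq p0 p1 f g) a = 0 → deriv (Iq p0 p1 f g) b = 0 → a = b := by
  have hbalance : ∀ a ∈ Ioo (0 : ℝ) 1, p1 * g' a = -(posteriorRatio p0 p1 a * (p0 * f' a)) :=
    fun a ha ↦ mul_eq_neg_posteriorRatio_mul hp0.1.ne' hp1.1.ne' ha.1.ne' ha.2.ne (hrel a ha)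
  have hFq : ∀ a ∈ Ioo (0 : ℝ) 1,
      Fq p0 p1 f g a = infoSlope p0 p1 (posteriorRatio p0 p1 a) (f a) (g a) :=
    fun a ha ↦ Fq_eq_infoSlope f g hp0.1.ne' hp ha.1.ne'
  have hratio_deriv : ∀ a ∈ Ioo (0 : ℝ) 1, (p1 / p0) ^ 2 * -(a ^ 2)⁻¹ < 0 := fun a ha ↦
    mul_neg_of_pos_of_neg (pow_pos (div_pos hp1.1 hp0.1) 2)
      (neg_neg_of_pos (inv_pos.2 (pow_pos ha.1 2)))
  have hmono : StrictMonoOn (Fq p0 p1 f g) (Ioo 0 1) :=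
    (strictMonoOn_infoSlope (convex_Ioo 0 1) hp0.1 hp1.1 hp hfmem hgmem hfg hfd hgd
      (fun a ha ↦ hasDerivAt_posteriorRatio p0 p1 ha.1.ne') (fun a ha ↦ (hf'pos a ha).le)
      hratio_deriv hbalance).congr fun a ha ↦ (hFq a ha).symm
  have hzero : ∀ a ∈ Ioo (0 : ℝ) 1, deriv (Iq p0 p1 f g) a = 0 → Fq p0 p1 f g a = 0 := by
    intro a ha hI
    rw [(hasDerivAt_Iq hp0.1.le hp1.1.le hp (hfmem a ha) (hgmem a ha) (hfd a ha) (hgd a ha)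
      (hbalance a ha)).deriv, ← hFq a ha] at hI
    exact (mul_eq_zero.1 hI).resolve_left (mul_pos hp0.1 (hf'pos a ha)).ne'
  exact ⟨hmono, fun a b ha hb hIa hIb ↦
    hmono.injOn ha hb ((hzero a ha hIa).trans (hzero b hb hIb).symm)⟩
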